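/- arXiv:1805.09602 — 2 statements merged into one kernel-verified Lean document; each statement's English description precedes it below -/
import Mathlib

section
/- There is an absolute constant c such that ∑_{j∈J} α_j ≤ (c/ε)·(∑_{j∈J^imm} α_j + ∑_{j∈J} w_j·p_j). -/
/-!
Write `α_j = α_j⁺ + w_j p_j / 2 + α_j⁻` and `k = 1 / ε`. The terms with `j ∉ J⁺`, resp. `j ∉ J⁻`,
are at most `k w_j p_j` by definition, so only `∑_{J⁺} α⁺` and `∑_{J⁻} α⁻` matter. Within a bucket
these values agree up to a factor `4`. In `T⁺` at least a `1 / k` fraction of each bucket is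
rejected, because its first job is, hence `∑_{J⁺} α⁺ ≤ 4 k ∑_{J^imm} α` (`sum_aP_Jplus`). In `T⁻` up
to `k - 1` jobs per bucket cannot be charged in this way, so one has to add `4 k` times the sum
of `2 ^ a` over the nonempty buckets `(a, b, c)` (`sum_aM_Jminus`).

To bound that sum (`sum_levels`), let `W_b` bound the weight of classes below `b` present at any
arrival. A job of `J⁻` in bucket `(a, b, c)` satisfies `2 ^ a ≤ α_j⁻ ≤ 2 ^ (c + 1) W_b`, and
`w_j p_j / ε < α_j⁻ ≤ p_j W_b` gives `2 ^ (b + c) ≤ w_j ≤ ε W_b`. Summing two geometric series, over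
`a` and then over `c`, leaves `8 ε ∑_b W_b ^ 2 / 2 ^ b`. With `W_b = ∑_{i < b} V_i`, where `V_i` bounds
the weight of class `i` present at any arrival, the Hardy-type inequality `hardy` reduces this to
`∑_i V_i ^ 2 / 2 ^ i`. Finally `V_i ^ 2 / 2 ^ i ≤ 4 ∑_{j in class i} (α_j⁺ + w_j p_j)` (`clW_sq_le`): expand
the square into pairs of simultaneously active jobs of class `i`; the later job of a pair already
paid for it in its `α⁺`, since remaining sizes only decrease. The factor `ε` cancels against `k`, and
`∑ α⁺` has already been bounded.

Beyond the rejection rules, the only property of the schedule that is used is that remaining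
sizes are nonincreasing in time.
-/


open Finset
open scoped Classical

noncomputable section

namespace NPSched

/-- The density `ρ_j = w_j / p_j` of job `j`. -/
def den (p : ℕ → ℕ) (w : ℕ → ℝ) (j : ℕ) : ℝ := w j / p j

/-- The density class `⌊ρ_j⌋₂` of job `j`: the largest integer `i` with `2 ^ i ≤ ρ_j`. -/
def cls (p : ℕ → ℕ) (w : ℕ → ℝ) (j : ℕ) : ℤ := Int.log 2 (den p w j)

/-- Remaining size `p_j(t)` of job `j` at integer time `t` under schedule `sched`,
where `sched t` is the job (if any) processed during the slot `[t, t+1]`. -/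
def rem (p : ℕ → ℕ) (sched : ℕ → Option ℕ) (j t : ℕ) : ℕ :=
  p j - ((Finset.range t).filter fun t' => sched t' = some j).card

/-- Remaining weight `w_j(t) = ρ_j · p_j(t)`. -/
def wrem (p : ℕ → ℕ) (w : ℕ → ℝ) (sched : ℕ → Option ℕ) (j t : ℕ) : ℝ :=
  den p w j * rem p sched j t

/-- Fractional weighted flow time `∑_{t ≥ r_j} w_j(t)` of job `j`. -/
def fracFlow (r p : ℕ → ℕ) (w : ℕ → ℝ) (sched : ℕ → Option ℕ) (j : ℕ) : ℝ :=
  ∑' t : ℕ, if r j ≤ t then wrem p w sched j t else 0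

/-- `s` is the first time at which job `j` is ever processed. -/
def isStart (sched : ℕ → Option ℕ) (j s : ℕ) : Prop :=
  sched s = some j ∧ ∀ s' < s, sched s' ≠ some j

/-- Active jobs `A(t)`: released by `t`, not immediately rejected, not yet finished. -/
def activeAt (J : Finset ℕ) (r p : ℕ → ℕ) (sched : ℕ → Option ℕ) (Jimm : Finset ℕ)
    (t : ℕ) : Finset ℕ :=
  J.filter fun j => r j ≤ t ∧ j ∉ Jimm ∧ 0 < rem p sched j t

/-- The set `A(r_j)` of active jobs present when `j` arrives: jobs released strictly
earlier, or simultaneously but earlier in the fixed (index) order, that are neither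
rejected nor finished.  (`j` itself is excluded.) -/
def arrSet (J : Finset ℕ) (r p : ℕ → ℕ) (sched : ℕ → Option ℕ) (Jimm : Finset ℕ)
    (j : ℕ) : Finset ℕ :=
  J.filter fun j' =>
    (r j' < r j ∨ (r j' = r j ∧ j' < j)) ∧ j' ∉ Jimm ∧ 0 < rem p sched j' (r j)

/-- `α_j`: the increase of total fractional weighted flow time caused by the arrival
of `j`, had HDF been run on `A(r_j) ∪ {j}` from time `r_j` on. -/
def alpha (J : Finset ℕ) (r p : ℕ → ℕ) (w : ℕ → ℝ) (sched : ℕ → Option ℕ)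
    (Jimm : Finset ℕ) (j : ℕ) : ℝ :=
  w j * ∑ j' ∈ (arrSet J r p sched Jimm j).filter (fun j' => den p w j ≤ den p w j'),
      (rem p sched j' (r j) : ℝ)
    + w j * p j / 2
    + p j * ∑ j' ∈ (arrSet J r p sched Jimm j).filter (fun j' => den p w j' < den p w j),
        wrem p w sched j' (r j)

/-- `α_j⁺`: the part of (the two sums of) `α_j` coming from jobs of density class
at least `⌊ρ_j⌋₂`. -/
def alphaPlus (J : Finset ℕ) (r p : ℕ → ℕ) (w : ℕ → ℝ) (sched : ℕ → Option ℕ)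
    (Jimm : Finset ℕ) (j : ℕ) : ℝ :=
  w j * ∑ j' ∈ (arrSet J r p sched Jimm j).filter
      (fun j' => cls p w j ≤ cls p w j' ∧ den p w j ≤ den p w j'),
      (rem p sched j' (r j) : ℝ)
    + p j * ∑ j' ∈ (arrSet J r p sched Jimm j).filter
        (fun j' => cls p w j ≤ cls p w j' ∧ den p w j' < den p w j),
        wrem p w sched j' (r j)

/-- `α_j⁻`: the contribution to `α_j` of jobs of density class strictly less
than `⌊ρ_j⌋₂`. -/
def alphaMinus (J : Finset ℕ) (r p : ℕ → ℕ) (w : ℕ → ℝ) (sched : ℕ → Option ℕ)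
    (Jimm : Finset ℕ) (j : ℕ) : ℝ :=
  p j * ∑ j' ∈ (arrSet J r p sched Jimm j).filter (fun j' => cls p w j' < cls p w j),
      wrem p w sched j' (r j)

/-- The set `J⁺` of jobs assigned to table `T⁺`. -/
def Jplus (J : Finset ℕ) (r p : ℕ → ℕ) (w : ℕ → ℝ) (sched : ℕ → Option ℕ)
    (Jimm : Finset ℕ) (ε : ℝ) : Finset ℕ :=
  J.filter fun j => w j * p j / ε ≤ alphaPlus J r p w sched Jimm j

/-- The set `J⁻` of jobs assigned to table `T⁻`. -/
def Jminus (J : Finset ℕ) (r p : ℕ → ℕ) (w : ℕ → ℝ) (sched : ℕ → Option ℕ)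
    (Jimm : Finset ℕ) (ε : ℝ) : Finset ℕ :=
  J.filter fun j => w j * p j / ε < alphaMinus J r p w sched Jimm j

/-- The bucket `(⌊α_j⁺/w_j⌋₂, ⌊w_j⌋₂)` of table `T⁺` to which a job of `J⁺` is assigned. -/
def bucketPlus (J : Finset ℕ) (r p : ℕ → ℕ) (w : ℕ → ℝ) (sched : ℕ → Option ℕ)
    (Jimm : Finset ℕ) (j : ℕ) : ℤ × ℤ :=
  (Int.log 2 (alphaPlus J r p w sched Jimm j / w j), Int.log 2 (w j))

/-- The bucket `(⌊α_j⁻⌋₂, ⌊ρ_j⌋₂, ⌊p_j⌋₂)` of table `T⁻` to which a job of `J⁻` is assigned. -/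
def bucketMinus (J : Finset ℕ) (r p : ℕ → ℕ) (w : ℕ → ℝ) (sched : ℕ → Option ℕ)
    (Jimm : Finset ℕ) (j : ℕ) : ℤ × ℤ × ℤ :=
  (Int.log 2 (alphaMinus J r p w sched Jimm j), cls p w j, Int.log 2 ((p j : ℝ)))

/-- `j'` arrives no later than `j` (simultaneous arrivals ordered by index). -/
def arrLE (r : ℕ → ℕ) (j' j : ℕ) : Prop :=
  r j' < r j ∨ (r j' = r j ∧ j' ≤ j)

/-- The (1-based) position of `j` in the arrival order of its bucket of `T⁺`. -/
def rankPlus (J : Finset ℕ) (r p : ℕ → ℕ) (w : ℕ → ℝ) (sched : ℕ → Option ℕ)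
    (Jimm : Finset ℕ) (ε : ℝ) (j : ℕ) : ℕ :=
  ((Jplus J r p w sched Jimm ε).filter fun j' =>
    bucketPlus J r p w sched Jimm j' = bucketPlus J r p w sched Jimm j ∧ arrLE r j' j).card

/-- The (1-based) position of `j` in the arrival order of its bucket of `T⁻`. -/
def rankMinus (J : Finset ℕ) (r p : ℕ → ℕ) (w : ℕ → ℝ) (sched : ℕ → Option ℕ)
    (Jimm : Finset ℕ) (ε : ℝ) (j : ℕ) : ℕ :=
  ((Jminus J r p w sched Jimm ε).filter fun j' =>
    bucketMinus J r p w sched Jimm j' = bucketMinus J r p w sched Jimm j ∧ arrLE r j' j).card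

/-- An execution of algorithm `A` on a job instance `(J, r, p, w)` with parameter
`ε` (where `k = 1/ε` is a positive integer): the data consists of the schedule
(`sched t` is the job processed in slot `[t, t+1]`), the set `Jimm` of immediately
rejected jobs, and the growing set `L t` of preemptible jobs; the fields below
axiomatise exactly the rules of algorithm `A`. -/
structure AlgA where
  /-- the (finite) set of jobs -/
  J : Finset ℕ
  /-- release times -/
  r : ℕ → ℕ
  /-- sizes -/
  p : ℕ → ℕ
  /-- weights -/
  w : ℕ → ℝ
  /-- the parameter ε -/
  ε : ℝ
  /-- `k = 1/ε`, a positive integer -/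
  k : ℕ
  /-- the schedule produced by algorithm `A` -/
  sched : ℕ → Option ℕ
  /-- the set `J^imm` of immediately rejected jobs -/
  Jimm : Finset ℕ
  /-- `L t` : the set of preemptible jobs at time `t` -/
  L : ℕ → Finset ℕ
  hp : ∀ j ∈ J, 0 < p j
  hw : ∀ j ∈ J, 0 < w j
  hε : 0 < ε
  hε2 : ε ^ 2 ≤ 1 / 2
  hk : (k : ℝ) = 1 / ε
  /-- immediate rejections: in each bucket of `T⁺` the first job and every
  `(1/ε)`-th job thereafter (positions `1, 1 + k, 1 + 2k, …`), and in each bucket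
  of `T⁻` every `(1/ε)`-th job (positions `k, 2k, …`), are rejected on arrival. -/
  hJimm : ∀ j, j ∈ Jimm ↔ j ∈ J ∧
    ((j ∈ Jplus J r p w sched Jimm ε ∧ rankPlus J r p w sched Jimm ε j % k = 1 % k) ∨
     (j ∈ Jminus J r p w sched Jimm ε ∧ rankMinus J r p w sched Jimm ε j % k = 0))
  hL0 : L 0 = ∅
  /-- a job enters `L` when the weight released since it started processing
  exceeds `w_j / ε`; once in `L` it stays in `L`. -/
  hLsucc : ∀ t j, j ∈ L (t + 1) ↔ j ∈ L t ∨
    (sched t = some j ∧ ∃ s, isStart sched j s ∧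
      w j / ε < ∑ j' ∈ J.filter (fun j' => s < r j' ∧ r j' ≤ t + 1), w j')
  /-- only active jobs are processed -/
  hvalid : ∀ t j, sched t = some j → j ∈ activeAt J r p sched Jimm t
  /-- a running job that is unfinished and not preemptible keeps running -/
  hcont : ∀ t j, sched t = some j → 0 < rem p sched j (t + 1) → j ∉ L (t + 1) →
    sched (t + 1) = some j
  /-- initially, a highest-density active job is processed (if any job is active) -/
  hHDF0 : (activeAt J r p sched Jimm 0 = ∅ ∧ sched 0 = none) ∨
    ∃ j, sched 0 = some j ∧ ∀ j' ∈ activeAt J r p sched Jimm 0, den p w j' ≤ den p w j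
  /-- whenever the previous job has finished or become preemptible (or no job was
  running), a highest-density active job is processed (if any job is active) -/
  hHDFsucc : ∀ t, (∀ j, sched t = some j → rem p sched j (t + 1) = 0 ∨ j ∈ L (t + 1)) →
    (activeAt J r p sched Jimm (t + 1) = ∅ ∧ sched (t + 1) = none) ∨
    ∃ j, sched (t + 1) = some j ∧
      ∀ j' ∈ activeAt J r p sched Jimm (t + 1), den p w j' ≤ den p w j
  /-- every job that is not immediately rejected is eventually finished by `A` -/
  hdone : ∀ j ∈ J, j ∉ Jimm → ∃ T, rem p sched j T = 0



/-! ### Geometric sums over finite sets of integers -/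

theorem geom_lt {x : ℝ} (hx : 1 < x) (s : Finset ℤ) :
    ∀ b : ℤ, (∀ i ∈ s, i < b) → ∑ i ∈ s, x ^ i ≤ x ^ b / (x - 1) := by
  have hx0 : 0 < x := by linarith
  have hx1 : 0 < x - 1 := by linarith
  induction s using Finset.induction_on_max with
  | empty => intro b _; simp only [Finset.sum_empty]; positivity
  | insert a s hs ih =>
    intro b hb
    rw [Finset.sum_insert (fun h => lt_irrefl _ (hs a h))]
    have h1 := ih a hs
    have h2 : x ^ (a + 1) ≤ x ^ b :=
      zpow_le_zpow_right₀ hx.le (by have := hb a (Finset.mem_insert_self _ _); omega)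
    rw [zpow_add_one₀ hx0.ne'] at h2
    calc x ^ a + ∑ i ∈ s, x ^ i ≤ x ^ a + x ^ a / (x - 1) := by linarith
      _ = x ^ a * x / (x - 1) := by field_simp; ring
      _ ≤ x ^ b / (x - 1) := by gcongr

theorem geom_gt (s : Finset ℤ) (b : ℤ) (h : ∀ i ∈ s, b < i) :
    ∑ i ∈ s, (3 / 4 : ℝ) ^ i ≤ 3 * (3 / 4 : ℝ) ^ b := by
  have key := geom_lt (x := 4 / 3) (by norm_num) (s.image fun i => -i) (-b) (by
    intro i hi
    obtain ⟨j, hj, rfl⟩ := Finset.mem_image.1 hi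
    have := h j hj
    omega)
  rw [Finset.sum_image (by intro a _ b _ hab; simpa using hab)] at key
  have e : ∀ i : ℤ, (4 / 3 : ℝ) ^ (-i) = (3 / 4 : ℝ) ^ i := by
    intro i; rw [zpow_neg, ← inv_zpow]; norm_num
  simp only [e] at key
  linarith [show (3 / 4 : ℝ) ^ b / (4 / 3 - 1) = 3 * (3 / 4 : ℝ) ^ b by ring]

/-- Distinct powers of two that are all at most `X` add up to at most `2 X`. -/
theorem geom_two (s : Finset ℤ) (X : ℝ) (hX : 0 ≤ X) (h : ∀ i ∈ s, (2 : ℝ) ^ i ≤ X) :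
    ∑ i ∈ s, (2 : ℝ) ^ i ≤ 2 * X := by
  induction s using Finset.induction_on_max with
  | empty => simpa using hX
  | insert a s hs ih =>
    rw [Finset.sum_insert (fun h => lt_irrefl _ (hs a h))]
    have h1 := geom_lt (x := 2) (by norm_num) s a hs
    have h2 := h a (Finset.mem_insert_self _ _)
    norm_num at h1
    linarith

/-- A Hardy-type inequality. The weights `(3/2) ^ i` in the Cauchy–Schwarz inequality are chosen
strictly between `1 ^ i` and `2 ^ i`, so that both resulting geometric series converge. -/
theorem hardy (K : Finset ℤ) (V : ℤ → ℝ) :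
    ∑ b ∈ K, (∑ i ∈ K with i < b, V i) ^ 2 / (2 : ℝ) ^ b ≤ 6 * ∑ i ∈ K, V i ^ 2 / (2 : ℝ) ^ i := by
  have h1 : ∀ b ∈ K, (∑ i ∈ K with i < b, V i) ^ 2 / (2 : ℝ) ^ b ≤
      ∑ i ∈ K, if i < b then 2 * (3 / 4 : ℝ) ^ b * (V i ^ 2 / (3 / 2 : ℝ) ^ i) else 0 := by
    intro b _
    have hg := geom_lt (x := 3 / 2) (by norm_num) (K.filter fun i => i < b) b
      (fun i hi => (Finset.mem_filter.1 hi).2)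
    have cs := Finset.sum_sq_le_sum_mul_sum_of_sq_le_mul (K.filter fun i => i < b)
      (r := V) (f := fun i => (3 / 2 : ℝ) ^ i) (g := fun i => V i ^ 2 / (3 / 2 : ℝ) ^ i)
      (fun i _ => by positivity) (fun i _ => by positivity) (fun i _ => by field_simp; rfl)
    have hq : 0 ≤ ∑ i ∈ K with i < b, V i ^ 2 / (3 / 2 : ℝ) ^ i :=
      Finset.sum_nonneg fun i _ => by positivity
    rw [← Finset.sum_filter, ← Finset.mul_sum]
    have e : (3 / 4 : ℝ) ^ b = (3 / 2 : ℝ) ^ b / (2 : ℝ) ^ b := by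
      rw [← div_zpow]; norm_num
    rw [e, div_le_iff₀ (by positivity)]
    calc _ ≤ _ := cs
      _ ≤ ((3 / 2 : ℝ) ^ b / (3 / 2 - 1)) * ∑ i ∈ K with i < b, V i ^ 2 / (3 / 2 : ℝ) ^ i := by
        gcongr
      _ = _ := by field_simp; ring
  refine (Finset.sum_le_sum h1).trans ?_
  rw [Finset.sum_comm, Finset.mul_sum]
  refine Finset.sum_le_sum fun i _ => ?_
  rw [← Finset.sum_filter, ← Finset.sum_mul, ← Finset.mul_sum]
  have hg := geom_gt (K.filter fun b => i < b) i (fun b hb => (Finset.mem_filter.1 hb).2)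
  have e : (3 / 4 : ℝ) ^ i = (3 / 2 : ℝ) ^ i / (2 : ℝ) ^ i := by
    rw [← div_zpow]; norm_num
  calc _ ≤ 2 * (3 * (3 / 4 : ℝ) ^ i) * (V i ^ 2 / (3 / 2 : ℝ) ^ i) := by gcongr
    _ = _ := by rw [e]; field_simp; ring

/-! ### Counting rejected jobs within a bucket -/

theorem count_one (k n : ℕ) (hk : 2 ≤ k) :
    n ≤ k * ((Finset.Icc 1 n).filter fun m => m % k = 1 % k).card := by
  induction n using Nat.strong_induction_on with
  | _ n ih =>
    rcases Nat.eq_zero_or_pos n with rfl | hn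
    · simp
    -- the last position `≡ 1` that is at most `n`, and the count strictly before it
    set m := n - (n - 1) % k with hm
    have hlt : (n - 1) % k < k := Nat.mod_lt _ (by omega)
    have hle : (n - 1) % k ≤ n - 1 := Nat.mod_le _ _
    have h1 := ih (m - 1) (by omega)
    have hmm : m % k = 1 % k := by
      have : m = 1 + k * ((n - 1) / k) := by
        have := Nat.div_add_mod (n - 1) k; omega
      rw [this, Nat.add_mul_mod_self_left]
    have h2 : insert m ((Finset.Icc 1 (m - 1)).filter fun m => m % k = 1 % k) ⊆
        (Finset.Icc 1 n).filter fun m => m % k = 1 % k := by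
      intro x hx
      simp only [Finset.mem_insert, Finset.mem_filter, Finset.mem_Icc] at hx ⊢
      rcases hx with rfl | hx
      · exact ⟨by omega, hmm⟩
      · exact ⟨by omega, hx.2⟩
    have h3 := Finset.card_le_card h2
    rw [Finset.card_insert_of_notMem (by
      simp only [Finset.mem_filter, Finset.mem_Icc]; omega)] at h3
    have h4 := Nat.mul_le_mul_left k h3
    rw [Nat.mul_add] at h4
    omega

theorem count_zero (k n : ℕ) (hk : 2 ≤ k) :
    n ≤ k * ((Finset.Icc 1 n).filter fun m => m % k = 0).card + k := by
  have h : ((Finset.Icc 1 n).filter fun m => m % k = 0).card = n / k := by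
    rw [← Nat.Ioc_filter_dvd_card_eq_div]
    congr 1
    ext x
    simp only [Finset.mem_filter, Finset.mem_Icc, Finset.mem_Ioc, Nat.dvd_iff_mod_eq_zero]
    omega
  rw [h]
  have := Nat.div_add_mod n k
  have := Nat.mod_lt n (show 0 < k by omega)
  omega

/-- Within a bucket `B`, the ranks in arrival order are exactly the positions `1, …, #B`. -/
theorem rank_count (r : ℕ → ℕ) (B : Finset ℕ) (q : ℕ → Prop) [DecidablePred q] :
    (B.filter fun j => q ((B.filter fun j' => arrLE r j' j).card)).card =
      ((Finset.Icc 1 B.card).filter q).card := by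
  set rk : ℕ → ℕ := fun j => (B.filter fun j' => arrLE r j' j).card with hrk
  have hlt : ∀ i ∈ B, ∀ j ∈ B, arrLE r i j → i ≠ j → rk i < rk j := by
    intro i hi j hj hij hne
    refine Finset.card_lt_card (Finset.ssubset_iff_of_subset ?_ |>.2 ⟨j, ?_, ?_⟩)
    · intro x hx
      simp only [Finset.mem_filter] at hx ⊢
      simp only [arrLE] at hx hij ⊢
      exact ⟨hx.1, by omega⟩
    · exact Finset.mem_filter.2 ⟨hj, Or.inr ⟨rfl, le_rfl⟩⟩
    · simp only [Finset.mem_filter]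
      simp only [arrLE] at hij ⊢
      omega
  have hinj : Set.InjOn rk B := by
    intro i hi j hj h
    by_contra hne
    have : arrLE r i j ∨ arrLE r j i := by simp only [arrLE]; omega
    rcases this with h' | h'
    · exact absurd h (hlt i hi j hj h' hne).ne
    · exact absurd h.symm (hlt j hj i hi h' (Ne.symm hne)).ne
  have himg : B.image rk = Finset.Icc 1 B.card := by
    apply Finset.eq_of_subset_of_card_le
    · intro x hx
      obtain ⟨j, hj, rfl⟩ := Finset.mem_image.1 hx
      refine Finset.mem_Icc.2 ⟨Finset.card_pos.2 ⟨j, ?_⟩, Finset.card_filter_le _ _⟩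
      exact Finset.mem_filter.2 ⟨hj, Or.inr ⟨rfl, le_rfl⟩⟩
    · rw [Finset.card_image_of_injOn hinj]; simp
  rw [← himg, Finset.filter_image,
    Finset.card_image_of_injOn (hinj.mono fun x hx => (Finset.mem_filter.1 hx).1)]

/-- If the values `v` in each bucket agree up to a factor `4` with the level `lev` of the bucket,
and the bucket of size `n` contains at least `(n - e) / k` elements satisfying `q`, then the total
value is charged to these elements, up to `e` extra elements per bucket. -/
theorem bucket_sum {β : Type*} [DecidableEq β] (P : Finset ℕ) (f : ℕ → β) (v : ℕ → ℝ) (lev : β → ℝ)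
    (q : ℕ → Prop) [DecidablePred q] (k e : ℕ) (hlo : ∀ j ∈ P, lev (f j) ≤ v j)
    (hhi : ∀ j ∈ P, v j ≤ 4 * lev (f j))
    (hcount : ∀ b, (P.filter fun j => f j = b).card ≤
      k * ((P.filter fun j => f j = b).filter q).card + e) :
    ∑ j ∈ P, v j ≤ 4 * k * ∑ j ∈ P with q j, v j + 4 * e * ∑ b ∈ P.image f, lev b := by
  rw [← Finset.sum_fiberwise_of_maps_to (t := P.image f) (g := f)
      (fun j hj => Finset.mem_image_of_mem f hj),
    ← Finset.sum_fiberwise_of_maps_to (s := P.filter q) (t := P.image f) (g := f)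
      (fun j hj => Finset.mem_image_of_mem f (Finset.mem_filter.1 hj).1),
    Finset.mul_sum, Finset.mul_sum, ← Finset.sum_add_distrib]
  refine Finset.sum_le_sum fun b hb => ?_
  obtain ⟨j₀, hj₀, rfl⟩ := Finset.mem_image.1 hb
  have hl : 0 ≤ lev (f j₀) := by linarith [hlo j₀ hj₀, hhi j₀ hj₀]
  have h1 : ∑ j ∈ P with f j = f j₀, v j ≤
      (P.filter fun j => f j = f j₀).card • (4 * lev (f j₀)) := by
    refine Finset.sum_le_card_nsmul _ _ _ fun j hj => ?_
    rw [← (Finset.mem_filter.1 hj).2]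
    exact hhi j (Finset.mem_filter.1 hj).1
  have h2 : ((P.filter fun j => f j = f j₀).filter q).card • lev (f j₀) ≤
      ∑ j ∈ (P.filter q).filter (fun j => f j = f j₀), v j := by
    rw [Finset.filter_comm]
    refine Finset.card_nsmul_le_sum _ _ _ fun j hj => ?_
    rw [Finset.mem_filter, Finset.mem_filter] at hj
    rw [← hj.2]
    exact hlo j hj.1.1
  have h3 : ((P.filter fun j => f j = f j₀).card : ℝ) ≤
      k * ((P.filter fun j => f j = f j₀).filter q).card + e := by
    exact_mod_cast hcount (f j₀)
  rw [nsmul_eq_mul] at h1 h2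
  calc _ ≤ _ := h1
    _ ≤ (k * ((P.filter fun j => f j = f j₀).filter q).card + e) * (4 * lev (f j₀)) := by gcongr
    _ = 4 * k * (((P.filter fun j => f j = f j₀).filter q).card * lev (f j₀))
        + 4 * e * lev (f j₀) := by ring
    _ ≤ _ := by gcongr

/-! ### Elementary properties of the quantities attached to a run -/

namespace AlgA

variable (A : AlgA)

/-- `α_j` in the run `A`. -/
abbrev al (j : ℕ) : ℝ := alpha A.J A.r A.p A.w A.sched A.Jimm j

/-- `α_j⁺` in the run `A`. -/
abbrev aP (j : ℕ) : ℝ := alphaPlus A.J A.r A.p A.w A.sched A.Jimm j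

/-- `α_j⁻` in the run `A`. -/
abbrev aM (j : ℕ) : ℝ := alphaMinus A.J A.r A.p A.w A.sched A.Jimm j

/-- The jobs that are active when `j` arrives. -/
abbrev arr (j : ℕ) : Finset ℕ := arrSet A.J A.r A.p A.sched A.Jimm j

/-- The density of `j`. -/
abbrev dn (j : ℕ) : ℝ := den A.p A.w j

/-- The density class of `j`. -/
abbrev cl (j : ℕ) : ℤ := cls A.p A.w j

/-- The remaining size of `j` at time `t`. -/
abbrev rm (j t : ℕ) : ℕ := rem A.p A.sched j t

/-- The remaining weight of `j` at time `t`. -/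
abbrev rwt (j t : ℕ) : ℝ := wrem A.p A.w A.sched j t

theorem mem_arr {i j : ℕ} : i ∈ A.arr j ↔ i ∈ A.J ∧
    (A.r i < A.r j ∨ (A.r i = A.r j ∧ i < j)) ∧ i ∉ A.Jimm ∧ 0 < A.rm i (A.r j) :=
  Finset.mem_filter

theorem p_pos {j : ℕ} (hj : j ∈ A.J) : (0 : ℝ) < A.p j := by exact_mod_cast A.hp j hj

theorem dn_pos {j : ℕ} (hj : j ∈ A.J) : 0 < A.dn j := div_pos (A.hw j hj) (A.p_pos hj)

theorem dn_mul_p {j : ℕ} (hj : j ∈ A.J) : A.dn j * A.p j = A.w j :=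
  div_mul_cancel₀ _ (A.p_pos hj).ne'

theorem le_dn {j : ℕ} (hj : j ∈ A.J) : (2 : ℝ) ^ A.cl j ≤ A.dn j :=
  Int.zpow_log_le_self (by norm_num) (A.dn_pos hj)

theorem dn_le {j : ℕ} : A.dn j ≤ 2 * (2 : ℝ) ^ A.cl j := by
  have h := Int.lt_zpow_succ_log_self (b := 2) (by norm_num) (A.dn j)
  rw [zpow_add_one₀ (by norm_num)] at h
  have h' : A.dn j < (2 : ℝ) ^ A.cl j * 2 := by exact_mod_cast h
  linarith

theorem rm_anti (j : ℕ) {s t : ℕ} (h : s ≤ t) : A.rm j t ≤ A.rm j s := by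
  refine Nat.sub_le_sub_left (Finset.card_le_card (Finset.filter_subset_filter _ ?_)) _
  intro x hx
  simp only [Finset.mem_range] at hx ⊢
  omega

theorem rm_le (j t : ℕ) : A.rm j t ≤ A.p j := Nat.sub_le _ _

theorem rwt_nonneg {j : ℕ} (hj : j ∈ A.J) (t : ℕ) : 0 ≤ A.rwt j t :=
  mul_nonneg (A.dn_pos hj).le (Nat.cast_nonneg _)

theorem rwt_le {j : ℕ} (hj : j ∈ A.J) (t : ℕ) : A.rwt j t ≤ A.w j := by
  rw [← A.dn_mul_p hj]
  exact mul_le_mul_of_nonneg_left (by exact_mod_cast A.rm_le j t) (A.dn_pos hj).le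

theorem rwt_anti {j : ℕ} (hj : j ∈ A.J) {s t : ℕ} (h : s ≤ t) : A.rwt j t ≤ A.rwt j s :=
  mul_le_mul_of_nonneg_left (by exact_mod_cast A.rm_anti j h) (A.dn_pos hj).le

theorem Jimm_subset : A.Jimm ⊆ A.J := fun j hj => ((A.hJimm j).1 hj).1

theorem k_pos : (0 : ℝ) < A.k := by rw [A.hk]; exact one_div_pos.2 A.hε

theorem two_le_k : 2 ≤ A.k := by
  by_contra h
  have h0 := A.k_pos
  have h1 : A.k = 1 := by
    have : 0 < A.k := by exact_mod_cast h0
    omega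
  have h2 := A.hk
  have h3 := A.hε2
  have : A.ε = 1 := by
    rw [h1, eq_div_iff A.hε.ne'] at h2
    simpa using h2
  rw [this] at h3
  norm_num at h3

theorem k_mul_eps : (A.k : ℝ) * A.ε = 1 := by
  rw [A.hk]; exact one_div_mul_cancel A.hε.ne'

theorem aP_eq (j : ℕ) : A.aP j = ∑ i ∈ A.arr j with A.cl j ≤ A.cl i,
    if A.dn j ≤ A.dn i then A.w j * (A.rm i (A.r j) : ℝ) else A.p j * A.rwt i (A.r j) := by
  rw [Finset.sum_ite, ← Finset.mul_sum, ← Finset.mul_sum, Finset.filter_filter,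
    Finset.filter_filter]
  simp only [not_le]
  rfl

theorem aP_nonneg {j : ℕ} (hj : j ∈ A.J) : 0 ≤ A.aP j := by
  rw [aP_eq]
  refine Finset.sum_nonneg fun i hi => ?_
  have hi' := (A.mem_arr.1 (Finset.mem_filter.1 hi).1).1
  have := (A.hw j hj).le
  have := A.rwt_nonneg hi' (A.r j)
  split_ifs <;> positivity

theorem aM_nonneg (j : ℕ) : 0 ≤ A.aM j :=
  mul_nonneg (Nat.cast_nonneg _) (Finset.sum_nonneg fun _ hi =>
    A.rwt_nonneg (A.mem_arr.1 (Finset.mem_filter.1 hi).1).1 _)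

theorem al_eq {j : ℕ} (hj : j ∈ A.J) : A.al j = A.aP j + A.w j * A.p j / 2 + A.aM j := by
  have mono : ∀ i, A.dn j ≤ A.dn i → A.cl j ≤ A.cl i := fun i h =>
    Int.log_mono_right (A.dn_pos hj) h
  have h1 : (A.arr j).filter (fun i => A.dn j ≤ A.dn i) =
      (A.arr j).filter (fun i => A.cl j ≤ A.cl i ∧ A.dn j ≤ A.dn i) :=
    Finset.filter_congr fun i _ => ⟨fun h => ⟨mono i h, h⟩, fun h => h.2⟩
  have h2 : ∑ i ∈ (A.arr j).filter (fun i => A.dn i < A.dn j), A.rwt i (A.r j) =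
      ∑ i ∈ (A.arr j).filter (fun i => A.cl j ≤ A.cl i ∧ A.dn i < A.dn j), A.rwt i (A.r j) +
      ∑ i ∈ (A.arr j).filter (fun i => A.cl i < A.cl j), A.rwt i (A.r j) := by
    rw [← Finset.sum_filter_add_sum_filter_not
      ((A.arr j).filter (fun i => A.dn i < A.dn j)) (fun i => A.cl j ≤ A.cl i),
      Finset.filter_filter, Finset.filter_filter]
    congr 2
    · exact Finset.filter_congr fun i _ => and_comm
    · refine Finset.filter_congr fun i _ => ?_
      rw [not_le]
      refine ⟨fun h => h.2, fun h => ⟨?_, h⟩⟩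
      by_contra h'
      exact absurd (mono i (not_lt.1 h')) (not_le.2 h)
  have e : A.al j = A.w j * ∑ i ∈ (A.arr j).filter (fun i => A.dn j ≤ A.dn i),
      (A.rm i (A.r j) : ℝ) + A.w j * A.p j / 2 +
      A.p j * ∑ i ∈ (A.arr j).filter (fun i => A.dn i < A.dn j), A.rwt i (A.r j) := rfl
  have e2 : A.aP j = A.w j * ∑ i ∈ (A.arr j).filter
      (fun i => A.cl j ≤ A.cl i ∧ A.dn j ≤ A.dn i), (A.rm i (A.r j) : ℝ) +
      A.p j * ∑ i ∈ (A.arr j).filter (fun i => A.cl j ≤ A.cl i ∧ A.dn i < A.dn j),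
        A.rwt i (A.r j) := rfl
  have e3 : A.aM j = A.p j * ∑ i ∈ (A.arr j).filter (fun i => A.cl i < A.cl j),
      A.rwt i (A.r j) := rfl
  rw [e, h1, h2, e2, e3]
  ring

theorem wp_nonneg {j : ℕ} (hj : j ∈ A.J) : 0 ≤ A.w j * A.p j :=
  mul_nonneg (A.hw j hj).le (Nat.cast_nonneg _)

theorem al_nonneg {j : ℕ} (hj : j ∈ A.J) : 0 ≤ A.al j := by
  rw [A.al_eq hj]
  linarith [A.aP_nonneg hj, A.aM_nonneg j, A.wp_nonneg hj]

theorem aP_le_al {j : ℕ} (hj : j ∈ A.J) : A.aP j ≤ A.al j := by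
  rw [A.al_eq hj]
  linarith [A.aM_nonneg j, A.wp_nonneg hj]

theorem aM_le_al {j : ℕ} (hj : j ∈ A.J) : A.aM j ≤ A.al j := by
  rw [A.al_eq hj]
  linarith [A.aP_nonneg hj, A.wp_nonneg hj]

/-! ### Charging the classes of active jobs to `α⁺` -/

/-- The weight remaining in class `i` when `j` arrives. -/
def clW (i : ℤ) (j : ℕ) : ℝ := ∑ j' ∈ A.arr j with A.cl j' = i, A.rwt j' (A.r j)

/-- The total of `α_j⁺ + w_j p_j` over the jobs of class `i`. -/
def clD (i : ℤ) : ℝ := ∑ j ∈ A.J with A.cl j = i, (A.aP j + A.w j * A.p j)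

theorem clD_nonneg (i : ℤ) : 0 ≤ A.clD i :=
  Finset.sum_nonneg fun j hj => by
    have hj' := (Finset.mem_filter.1 hj).1
    linarith [A.aP_nonneg hj', A.wp_nonneg hj']

/-- If two jobs of the same class are active at time `t`, then the earlier of them contributes to
`α⁺` of the later one at least the product of their weights remaining at `t`, divided by their
density (up to a factor `2`). The terms of the row of `j` therefore sum to at most
`2 ^ (i + 1) (α_j⁺ + w_j p_j)`, the summand `w_j p_j` accounting for the diagonal. -/
theorem row_le (j₀ j : ℕ) (i : ℤ) (hj : j ∈ (A.arr j₀).filter fun j' => A.cl j' = i) :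
    ∑ j' ∈ (A.arr j₀).filter (fun j' => A.cl j' = i),
      (if arrLE A.r j' j then A.rwt j (A.r j₀) * A.rwt j' (A.r j₀) else 0) ≤
    2 * (2 : ℝ) ^ i * (A.aP j + A.w j * A.p j) := by
  set t := A.r j₀ with ht
  set E := (A.arr j₀).filter fun j' => A.cl j' = i with hE
  obtain ⟨hjA, hji⟩ := Finset.mem_filter.1 hj
  obtain ⟨hjJ, hjb, -, hjr⟩ := A.mem_arr.1 hjA
  have hrt : A.r j ≤ t := by omega
  have hdj : A.dn j ≤ 2 * (2 : ℝ) ^ i := hji ▸ A.dn_le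
  have hxj := A.rwt_nonneg hjJ t
  rw [← Finset.sum_filter]
  set F := (A.arr j).filter fun j' => A.cl j ≤ A.cl j' with hF
  have hjF : j ∉ F := by
    intro h
    have := (A.mem_arr.1 (Finset.mem_filter.1 h).1).2.1
    omega
  have hsub : E.filter (fun j' => arrLE A.r j' j) ⊆ insert j (F.filter (· ∈ E)) := by
    intro j' h
    obtain ⟨h1, h2⟩ := Finset.mem_filter.1 h
    obtain ⟨h3, h4⟩ := Finset.mem_filter.1 h1
    obtain ⟨h5, -, h6, h7⟩ := A.mem_arr.1 h3
    rw [Finset.mem_insert, or_iff_not_imp_left]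
    intro hne
    refine Finset.mem_filter.2 ⟨Finset.mem_filter.2 ⟨A.mem_arr.2 ⟨h5, ?_, h6, ?_⟩, ?_⟩, h1⟩
    · simp only [arrLE] at h2; omega
    · exact lt_of_lt_of_le h7 (A.rm_anti j' hrt)
    · rw [hji, h4]
  have hdiag : A.rwt j t * A.rwt j t ≤ 2 * (2 : ℝ) ^ i * (A.w j * A.p j) := by
    have h1 : A.rwt j t ≤ A.dn j * A.p j := by rw [A.dn_mul_p hjJ]; exact A.rwt_le hjJ t
    have h2 := A.rwt_le hjJ t
    have hw := (A.hw j hjJ).le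
    have hp := (A.p_pos hjJ).le
    calc A.rwt j t * A.rwt j t ≤ A.w j * (A.dn j * A.p j) := mul_le_mul h2 h1 hxj hw
      _ ≤ A.w j * ((2 * (2 : ℝ) ^ i) * A.p j) := by gcongr
      _ = _ := by ring
  have hoff : ∑ j' ∈ F.filter (· ∈ E), A.rwt j t * A.rwt j' t ≤ 2 * (2 : ℝ) ^ i * A.aP j := by
    rw [A.aP_eq, Finset.mul_sum]
    have hnn : ∀ j' ∈ F, 0 ≤ 2 * (2 : ℝ) ^ i * (if A.dn j ≤ A.dn j' then
        A.w j * (A.rm j' (A.r j) : ℝ) else A.p j * A.rwt j' (A.r j)) := by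
      intro j' h
      have hJ := (A.mem_arr.1 (Finset.mem_filter.1 h).1).1
      have := (A.hw j hjJ).le
      have := A.rwt_nonneg hJ (A.r j)
      split_ifs <;> positivity
    refine (Finset.sum_le_sum fun j' h => ?_).trans
      (Finset.sum_le_sum_of_subset_of_nonneg (Finset.filter_subset (· ∈ E) F)
        fun j' h _ => hnn j' h)
    obtain ⟨h1, h2⟩ := Finset.mem_filter.1 h
    obtain ⟨h3, h4⟩ := Finset.mem_filter.1 h2
    have hJ := (A.mem_arr.1 h3).1
    have hd : A.dn j' ≤ 2 * (2 : ℝ) ^ i := h4 ▸ A.dn_le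
    have hx' := A.rwt_nonneg hJ t
    have hw := (A.hw j hjJ).le
    have hp := (A.p_pos hjJ).le
    have hle := A.rwt_anti hJ hrt
    split_ifs
    · calc A.rwt j t * A.rwt j' t ≤ A.w j * A.rwt j' (A.r j) :=
            mul_le_mul (A.rwt_le hjJ t) hle hx' hw
        _ = A.w j * (A.dn j' * (A.rm j' (A.r j) : ℝ)) := rfl
        _ ≤ A.w j * ((2 * (2 : ℝ) ^ i) * (A.rm j' (A.r j) : ℝ)) := by gcongr
        _ = _ := by ring
    · have h5 : A.rwt j t ≤ (2 * (2 : ℝ) ^ i) * A.p j := by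
        refine (A.rwt_le hjJ t).trans ?_
        rw [← A.dn_mul_p hjJ]
        gcongr
      calc A.rwt j t * A.rwt j' t ≤ ((2 * (2 : ℝ) ^ i) * A.p j) * A.rwt j' (A.r j) :=
            mul_le_mul h5 hle hx' (by positivity)
        _ = _ := by ring
  calc _ ≤ ∑ j' ∈ insert j (F.filter (· ∈ E)), A.rwt j t * A.rwt j' t := by
        refine Finset.sum_le_sum_of_subset_of_nonneg hsub fun j' h _ => ?_
        rcases Finset.mem_insert.1 h with rfl | h
        · exact mul_nonneg hxj hxj
        · exact mul_nonneg hxj (A.rwt_nonneg (A.mem_arr.1 (Finset.mem_filter.1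
            (Finset.mem_filter.1 h).1).1).1 t)
    _ = A.rwt j t * A.rwt j t + ∑ j' ∈ F.filter (· ∈ E), A.rwt j t * A.rwt j' t :=
        Finset.sum_insert fun h => hjF (Finset.mem_filter.1 h).1
    _ ≤ _ := by linarith

theorem clW_sq_le (i : ℤ) (j₀ : ℕ) : A.clW i j₀ ^ 2 ≤ 4 * (2 : ℝ) ^ i * A.clD i := by
  set t := A.r j₀ with ht
  set E := (A.arr j₀).filter fun j' => A.cl j' = i with hE
  have hEJ : ∀ j ∈ E, j ∈ A.J := fun j hj => (A.mem_arr.1 (Finset.mem_filter.1 hj).1).1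
  set g : ℕ → ℕ → ℝ := fun j j' => if arrLE A.r j' j then A.rwt j t * A.rwt j' t else 0 with hg
  have hrow : ∑ j ∈ E, ∑ j' ∈ E, g j j' ≤ 2 * (2 : ℝ) ^ i * A.clD i := by
    refine (Finset.sum_le_sum fun j hj => A.row_le j₀ j i hj).trans ?_
    rw [← Finset.mul_sum]
    refine mul_le_mul_of_nonneg_left ?_ (by positivity)
    refine Finset.sum_le_sum_of_subset_of_nonneg ?_ ?_
    · intro j hj
      exact Finset.mem_filter.2 ⟨hEJ j hj, (Finset.mem_filter.1 hj).2⟩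
    · intro j hj _
      have hj' := (Finset.mem_filter.1 hj).1
      linarith [A.aP_nonneg hj', A.wp_nonneg hj']
  have hsq : A.clW i j₀ ^ 2 ≤ ∑ j ∈ E, ∑ j' ∈ E, (g j j' + g j' j) := by
    rw [sq]
    show (∑ j ∈ E, A.rwt j t) * (∑ j' ∈ E, A.rwt j' t) ≤ _
    rw [Finset.sum_mul_sum]
    refine Finset.sum_le_sum fun j hj => Finset.sum_le_sum fun j' hj' => ?_
    have hn := mul_nonneg (A.rwt_nonneg (hEJ j hj) t) (A.rwt_nonneg (hEJ j' hj') t)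
    have htot : arrLE A.r j' j ∨ arrLE A.r j j' := by simp only [arrLE]; omega
    simp only [hg, mul_comm (A.rwt j' t)]
    rcases htot with h | h
    · rw [if_pos h]; split_ifs <;> linarith
    · rw [if_pos h]; split_ifs <;> linarith
  simp only [Finset.sum_add_distrib] at hsq
  rw [Finset.sum_comm (f := fun j j' => g j' j)] at hsq
  linarith

/-- An upper bound for the weight remaining in classes below `b` at any arrival. -/
def lowW (b : ℤ) : ℝ := ∑ i ∈ A.J.image A.cl with i < b, √(4 * (2 : ℝ) ^ i * A.clD i)

theorem lowW_nonneg (b : ℤ) : 0 ≤ A.lowW b := Finset.sum_nonneg fun _ _ => Real.sqrt_nonneg _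

theorem aM_le_lowW (j : ℕ) : A.aM j ≤ A.p j * A.lowW (A.cl j) := by
  refine mul_le_mul_of_nonneg_left ?_ (Nat.cast_nonneg _)
  rw [← Finset.sum_fiberwise_of_maps_to (t := (A.J.image A.cl).filter (· < A.cl j)) (g := A.cl)]
  · refine Finset.sum_le_sum fun i hi => ?_
    refine le_trans ?_ (Real.le_sqrt_of_sq_le (A.clW_sq_le i j))
    refine Finset.sum_le_sum_of_subset_of_nonneg ?_ ?_
    · exact Finset.filter_subset_filter _ (Finset.filter_subset _ _)
    · intro j' hj' _
      exact A.rwt_nonneg (A.mem_arr.1 (Finset.mem_filter.1 hj').1).1 _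
  · intro j' hj'
    obtain ⟨h1, h2⟩ := Finset.mem_filter.1 hj'
    exact Finset.mem_filter.2 ⟨Finset.mem_image_of_mem _ (A.mem_arr.1 h1).1, h2⟩

theorem lowW_sum : ∑ b ∈ A.J.image A.cl, A.lowW b ^ 2 / (2 : ℝ) ^ b ≤
    24 * ∑ j ∈ A.J, (A.aP j + A.w j * A.p j) := by
  refine (hardy _ _).trans ?_
  rw [← Finset.sum_fiberwise_of_maps_to (s := A.J) (t := A.J.image A.cl) (g := A.cl)
    (fun j hj => Finset.mem_image_of_mem _ hj), Finset.mul_sum, Finset.mul_sum]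
  refine le_of_eq (Finset.sum_congr rfl fun i _ => ?_)
  have h2 : (0 : ℝ) < (2 : ℝ) ^ i := by positivity
  rw [Real.sq_sqrt (mul_nonneg (by positivity) (A.clD_nonneg i))]
  show _ = 24 * A.clD i
  field_simp
  ring

/-! ### The two tables -/

theorem rankPlus_eq (j : ℕ) :
    rankPlus A.J A.r A.p A.w A.sched A.Jimm A.ε j =
      (((Jplus A.J A.r A.p A.w A.sched A.Jimm A.ε).filter fun j' =>
        bucketPlus A.J A.r A.p A.w A.sched A.Jimm j' =
          bucketPlus A.J A.r A.p A.w A.sched A.Jimm j).filter fun j' => arrLE A.r j' j).card := by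
  rw [Finset.filter_filter]; rfl

theorem rankMinus_eq (j : ℕ) :
    rankMinus A.J A.r A.p A.w A.sched A.Jimm A.ε j =
      (((Jminus A.J A.r A.p A.w A.sched A.Jimm A.ε).filter fun j' =>
        bucketMinus A.J A.r A.p A.w A.sched A.Jimm j' =
          bucketMinus A.J A.r A.p A.w A.sched A.Jimm j).filter fun j' => arrLE A.r j' j).card := by
  rw [Finset.filter_filter]; rfl

theorem log_bounds {x : ℝ} (hx : 0 < x) :
    (2 : ℝ) ^ Int.log 2 x ≤ x ∧ x ≤ 2 * (2 : ℝ) ^ Int.log 2 x := by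
  have h1 := Int.zpow_log_le_self (b := 2) (by norm_num) hx
  have h2 := Int.lt_zpow_succ_log_self (b := 2) (by norm_num) x
  rw [zpow_add_one₀ (by norm_num)] at h2
  push_cast at h1 h2
  exact ⟨h1, by linarith⟩

theorem sum_rejected_le (P : Finset ℕ) (q : ℕ → Prop) [DecidablePred q] (v : ℕ → ℝ)
    (hq : ∀ j ∈ P, q j → j ∈ A.Jimm) (hv : ∀ j ∈ A.J, v j ≤ A.al j) :
    ∑ j ∈ P with q j, v j ≤ ∑ j ∈ A.Jimm, A.al j := by
  have hsub : P.filter q ⊆ A.Jimm := fun j hj =>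
    hq j (Finset.mem_filter.1 hj).1 (Finset.mem_filter.1 hj).2
  refine (Finset.sum_le_sum fun j hj => hv j (A.Jimm_subset (hsub hj))).trans ?_
  exact Finset.sum_le_sum_of_subset_of_nonneg hsub fun j hj _ => A.al_nonneg (A.Jimm_subset hj)

theorem sum_aP_Jplus : ∑ j ∈ Jplus A.J A.r A.p A.w A.sched A.Jimm A.ε, A.aP j ≤
    4 * A.k * ∑ j ∈ A.Jimm, A.al j := by
  set P := Jplus A.J A.r A.p A.w A.sched A.Jimm A.ε with hP
  have hlev : ∀ j ∈ P, (2 : ℝ) ^ Int.log 2 (A.aP j / A.w j) * (2 : ℝ) ^ Int.log 2 (A.w j) ≤ A.aP j ∧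
      A.aP j ≤ 4 * ((2 : ℝ) ^ Int.log 2 (A.aP j / A.w j) * (2 : ℝ) ^ Int.log 2 (A.w j)) := by
    intro j hj
    obtain ⟨hjJ, hja⟩ := Finset.mem_filter.1 hj
    have hw := A.hw j hjJ
    have hpos : 0 < A.aP j :=
      lt_of_lt_of_le (div_pos (mul_pos hw (A.p_pos hjJ)) A.hε) hja
    obtain ⟨h1, h2⟩ := log_bounds (div_pos hpos hw)
    obtain ⟨h3, h4⟩ := log_bounds hw
    have e : A.aP j = A.aP j / A.w j * A.w j := (div_mul_cancel₀ _ hw.ne').symm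
    constructor
    · calc _ ≤ A.aP j / A.w j * A.w j := by gcongr
        _ = _ := e.symm
    · calc A.aP j = A.aP j / A.w j * A.w j := e
        _ ≤ (2 * (2 : ℝ) ^ Int.log 2 (A.aP j / A.w j)) * (2 * (2 : ℝ) ^ Int.log 2 (A.w j)) := by
          gcongr
        _ = _ := by ring
  have hb := bucket_sum P (fun j => bucketPlus A.J A.r A.p A.w A.sched A.Jimm j) A.aP
    (fun b => (2 : ℝ) ^ b.1 * (2 : ℝ) ^ b.2)
    (fun j => rankPlus A.J A.r A.p A.w A.sched A.Jimm A.ε j % A.k = 1 % A.k) A.k 0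
    (fun j hj => (hlev j hj).1) (fun j hj => (hlev j hj).2) (by
      intro b
      set B := P.filter fun j => bucketPlus A.J A.r A.p A.w A.sched A.Jimm j = b with hB
      have h := count_one A.k B.card A.two_le_k
      rw [← rank_count A.r B (fun m => m % A.k = 1 % A.k)] at h
      refine h.trans_eq ?_
      rw [add_zero]
      congr 2
      refine Finset.filter_congr fun j hj => ?_
      rw [rankPlus_eq, (Finset.mem_filter.1 hj).2])
  have hrej := A.sum_rejected_le P
    (fun j => rankPlus A.J A.r A.p A.w A.sched A.Jimm A.ε j % A.k = 1 % A.k) A.aP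
    (fun j hj hq => (A.hJimm j).2 ⟨(Finset.mem_filter.1 hj).1, Or.inl ⟨hj, hq⟩⟩)
    (fun j hj => A.aP_le_al hj)
  have hk := A.k_pos
  calc _ ≤ _ := hb
    _ ≤ 4 * A.k * ∑ j ∈ A.Jimm, A.al j := by
      rw [Nat.cast_zero, mul_zero, zero_mul, add_zero]
      gcongr

/-- The levels of the nonempty buckets of `T⁻`. A job `j` of `J⁻` in class `b` satisfies
`w_j < ε W` for the weight `W` present in lower classes, which bounds `p_j` in terms of `W` and
`b`; so for every `b` the levels form a doubly geometric sum of order `ε W ^ 2 / 2 ^ b`. -/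
theorem sum_levels : ∑ β ∈ (Jminus A.J A.r A.p A.w A.sched A.Jimm A.ε).image
      (fun j => bucketMinus A.J A.r A.p A.w A.sched A.Jimm j), (2 : ℝ) ^ β.1 ≤
    192 * A.ε * ∑ j ∈ A.J, (A.aP j + A.w j * A.p j) := by
  have hε := A.hε
  set P := Jminus A.J A.r A.p A.w A.sched A.Jimm A.ε with hP
  set f := fun j => bucketMinus A.J A.r A.p A.w A.sched A.Jimm j with hf
  set T := P.image f with hT
  set K := A.J.image A.cl with hK
  set U := T.image fun β => β.1 with hU
  set C := T.image fun β => β.2.2 with hC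
  have hcond : ∀ β ∈ T, β.2.1 ∈ K ∧ (2 : ℝ) ^ β.2.2 ≤ A.ε * A.lowW β.2.1 / (2 : ℝ) ^ β.2.1 ∧
      (2 : ℝ) ^ β.1 ≤ 2 * (2 : ℝ) ^ β.2.2 * A.lowW β.2.1 := by
    intro β hβ
    obtain ⟨j, hj, rfl⟩ := Finset.mem_image.1 hβ
    obtain ⟨hjJ, hja⟩ := Finset.mem_filter.1 hj
    have hw := A.hw j hjJ
    have hp := A.p_pos hjJ
    have hpos : 0 < A.aM j := lt_trans (div_pos (mul_pos hw hp) A.hε) hja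
    obtain ⟨h1, h2⟩ := log_bounds hpos
    obtain ⟨h3, h4⟩ := log_bounds hp
    have h5 := A.aM_le_lowW j
    have h6 := A.lowW_nonneg (A.cl j)
    refine ⟨Finset.mem_image_of_mem _ hjJ, ?_, ?_⟩
    · show (2 : ℝ) ^ Int.log 2 (A.p j : ℝ) ≤ A.ε * A.lowW (A.cl j) / (2 : ℝ) ^ A.cl j
      rw [le_div_iff₀ (by positivity)]
      have h7 : A.w j ≤ A.ε * A.lowW (A.cl j) := by
        have h8 : A.w j * A.p j / A.ε < A.p j * A.lowW (A.cl j) := lt_of_lt_of_le hja h5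
        rw [div_lt_iff₀ A.hε] at h8
        nlinarith
      calc _ ≤ (A.p j : ℝ) * A.dn j :=
            mul_le_mul h3 (A.le_dn hjJ) (by positivity) hp.le
        _ = A.w j := by rw [mul_comm, A.dn_mul_p hjJ]
        _ ≤ _ := h7
    · show (2 : ℝ) ^ Int.log 2 (A.aM j) ≤ 2 * (2 : ℝ) ^ Int.log 2 (A.p j : ℝ) * A.lowW (A.cl j)
      exact (h1.trans h5).trans (by gcongr)
  set R : ℤ → ℤ → ℤ → Prop := fun a b c =>
    (2 : ℝ) ^ c ≤ A.ε * A.lowW b / (2 : ℝ) ^ b ∧ (2 : ℝ) ^ a ≤ 2 * (2 : ℝ) ^ c * A.lowW b with hR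
  have hprod : ∑ β ∈ T, (2 : ℝ) ^ β.1 ≤
      ∑ b ∈ K, ∑ c ∈ C, ∑ a ∈ U, if R a b c then (2 : ℝ) ^ a else 0 := by
    have e : ∑ β ∈ K ×ˢ (C ×ˢ U), (if R β.2.2 β.1 β.2.1 then (2 : ℝ) ^ β.2.2 else 0) =
        ∑ b ∈ K, ∑ c ∈ C, ∑ a ∈ U, if R a b c then (2 : ℝ) ^ a else 0 := by
      rw [Finset.sum_product]
      exact Finset.sum_congr rfl fun b _ => Finset.sum_product _ _ _
    rw [← e, ← Finset.sum_filter]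
    rw [← Finset.sum_image (s := T) (g := fun β : ℤ × ℤ × ℤ => (β.2.1, β.2.2, β.1))
      (f := fun β => (2 : ℝ) ^ β.2.2)]
    · refine Finset.sum_le_sum_of_subset_of_nonneg ?_ fun _ _ _ => by positivity
      intro γ hγ
      obtain ⟨β, hβ, rfl⟩ := Finset.mem_image.1 hγ
      obtain ⟨h1, h2, h3⟩ := hcond β hβ
      refine Finset.mem_filter.2 ⟨Finset.mem_product.2 ⟨h1, Finset.mem_product.2
        ⟨Finset.mem_image_of_mem _ hβ, Finset.mem_image_of_mem _ hβ⟩⟩, h2, h3⟩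
    · rintro ⟨a, b, c⟩ _ ⟨a', b', c'⟩ _ h
      simp only [Prod.mk.injEq] at h ⊢
      tauto
  refine hprod.trans ?_
  have hbd : ∀ b ∈ K, ∑ c ∈ C, ∑ a ∈ U, (if R a b c then (2 : ℝ) ^ a else 0) ≤
      8 * A.ε * (A.lowW b ^ 2 / (2 : ℝ) ^ b) := by
    intro b _
    have hM := A.lowW_nonneg b
    set X := A.ε * A.lowW b / (2 : ℝ) ^ b with hX
    have hX0 : 0 ≤ X := by positivity
    have h1 : ∀ c ∈ C, ∑ a ∈ U, (if R a b c then (2 : ℝ) ^ a else 0) ≤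
        if (2 : ℝ) ^ c ≤ X then 4 * A.lowW b * (2 : ℝ) ^ c else 0 := by
      intro c _
      rw [← Finset.sum_filter]
      split_ifs with hc
      · have := geom_two (U.filter fun a => R a b c) (2 * (2 : ℝ) ^ c * A.lowW b)
          (by positivity) (fun a ha => (Finset.mem_filter.1 ha).2.2)
        linarith
      · rw [Finset.filter_false_of_mem fun a _ h => hc h.1, Finset.sum_empty]
    refine (Finset.sum_le_sum h1).trans ?_
    rw [← Finset.sum_filter, ← Finset.mul_sum]
    have h2 := geom_two (C.filter fun c => (2 : ℝ) ^ c ≤ X) X hX0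
      (fun c hc => (Finset.mem_filter.1 hc).2)
    calc _ ≤ 4 * A.lowW b * (2 * X) := by gcongr
      _ = _ := by rw [hX]; ring
  refine (Finset.sum_le_sum hbd).trans ?_
  rw [← Finset.mul_sum]
  calc _ ≤ 8 * A.ε * (24 * ∑ j ∈ A.J, (A.aP j + A.w j * A.p j)) := by
        have := A.lowW_sum
        gcongr
    _ = _ := by ring

theorem sum_aM_Jminus : ∑ j ∈ Jminus A.J A.r A.p A.w A.sched A.Jimm A.ε, A.aM j ≤
    4 * A.k * ∑ j ∈ A.Jimm, A.al j + 768 * ∑ j ∈ A.J, (A.aP j + A.w j * A.p j) := by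
  set P := Jminus A.J A.r A.p A.w A.sched A.Jimm A.ε with hP
  have hlev : ∀ j ∈ P, (2 : ℝ) ^ Int.log 2 (A.aM j) ≤ A.aM j ∧
      A.aM j ≤ 4 * (2 : ℝ) ^ Int.log 2 (A.aM j) := by
    intro j hj
    obtain ⟨hjJ, hja⟩ := Finset.mem_filter.1 hj
    have hpos : 0 < A.aM j := lt_trans (div_pos (mul_pos (A.hw j hjJ) (A.p_pos hjJ)) A.hε) hja
    obtain ⟨h1, h2⟩ := log_bounds hpos
    exact ⟨h1, by linarith⟩
  have hb := bucket_sum P (fun j => bucketMinus A.J A.r A.p A.w A.sched A.Jimm j) A.aM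
    (fun b => (2 : ℝ) ^ b.1)
    (fun j => rankMinus A.J A.r A.p A.w A.sched A.Jimm A.ε j % A.k = 0) A.k A.k
    (fun j hj => (hlev j hj).1) (fun j hj => (hlev j hj).2) (by
      intro b
      set B := P.filter fun j => bucketMinus A.J A.r A.p A.w A.sched A.Jimm j = b with hB
      have h := count_zero A.k B.card A.two_le_k
      rw [← rank_count A.r B (fun m => m % A.k = 0)] at h
      refine h.trans_eq ?_
      congr 3
      refine Finset.filter_congr fun j hj => ?_
      rw [rankMinus_eq, (Finset.mem_filter.1 hj).2])
  have hrej := A.sum_rejected_le P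
    (fun j => rankMinus A.J A.r A.p A.w A.sched A.Jimm A.ε j % A.k = 0) A.aM
    (fun j hj hq => (A.hJimm j).2 ⟨(Finset.mem_filter.1 hj).1, Or.inr ⟨hj, hq⟩⟩)
    (fun j hj => A.aM_le_al hj)
  have hk := A.k_pos
  have hl := A.sum_levels
  calc _ ≤ _ := hb
    _ ≤ 4 * A.k * ∑ j ∈ A.Jimm, A.al j +
        4 * A.k * (192 * A.ε * ∑ j ∈ A.J, (A.aP j + A.w j * A.p j)) := by gcongr
    _ = 4 * A.k * ∑ j ∈ A.Jimm, A.al j +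
        768 * (A.k * A.ε) * ∑ j ∈ A.J, (A.aP j + A.w j * A.p j) := by ring
    _ = _ := by rw [A.k_mul_eps, mul_one]

/-- Jobs outside the set `Q` cost at most `w_j p_j / ε` each. -/
theorem sum_split (Q : Finset ℕ) (v : ℕ → ℝ) (hQ : Q ⊆ A.J)
    (h : ∀ j ∈ A.J, j ∉ Q → v j ≤ A.w j * A.p j / A.ε) :
    ∑ j ∈ A.J, v j ≤ ∑ j ∈ Q, v j + A.k * ∑ j ∈ A.J, A.w j * A.p j := by
  rw [← Finset.sum_sdiff hQ, add_comm]
  refine add_le_add_right ?_ _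
  have e : ∀ x : ℝ, x / A.ε = A.k * x := by intro x; rw [A.hk]; ring
  rw [Finset.mul_sum]
  refine (Finset.sum_le_sum (g := fun j => A.k * (A.w j * A.p j)) fun j hj => ?_).trans
    (Finset.sum_le_sum_of_subset_of_nonneg Finset.sdiff_subset fun j hj _ =>
      mul_nonneg A.k_pos.le (A.wp_nonneg hj))
  obtain ⟨h1, h2⟩ := Finset.mem_sdiff.1 hj
  rw [← e]
  exact h j h1 h2

end AlgA

/-- `∑_{j∈J} α_j ≤ (c/ε)·(∑_{j∈J^imm} α_j + ∑_{j∈J} w_j·p_j)`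
for an absolute constant `c`. -/
theorem alpha_sum_le :
    ∃ c : ℝ, 0 < c ∧ ∀ A : AlgA,
      ∑ j ∈ A.J, alpha A.J A.r A.p A.w A.sched A.Jimm j ≤
        (c / A.ε) * ((∑ j ∈ A.Jimm, alpha A.J A.r A.p A.w A.sched A.Jimm j) +
          ∑ j ∈ A.J, A.w j * A.p j) := by
  refine ⟨10000, by norm_num, fun A => ?_⟩
  have hP := A.sum_split (Jplus A.J A.r A.p A.w A.sched A.Jimm A.ε) A.aP
    (Finset.filter_subset _ _) (fun j hj h => by
      by_contra h'
      exact h (Finset.mem_filter.2 ⟨hj, (not_le.1 h').le⟩))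
  have hM := A.sum_split (Jminus A.J A.r A.p A.w A.sched A.Jimm A.ε) A.aM
    (Finset.filter_subset _ _) (fun j hj h => by
      by_contra h'
      exact h (Finset.mem_filter.2 ⟨hj, not_le.1 h'⟩))
  have hP' := A.sum_aP_Jplus
  have hM' := A.sum_aM_Jminus
  have hsum : ∑ j ∈ A.J, A.al j = ∑ j ∈ A.J, A.aP j + (∑ j ∈ A.J, A.w j * A.p j) / 2 +
      ∑ j ∈ A.J, A.aM j := by
    rw [Finset.sum_div, ← Finset.sum_add_distrib, ← Finset.sum_add_distrib]
    exact Finset.sum_congr rfl fun j hj => A.al_eq hj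
  rw [Finset.sum_add_distrib] at hM'
  have hX : 0 ≤ ∑ j ∈ A.Jimm, A.al j :=
    Finset.sum_nonneg fun j hj => A.al_nonneg (A.Jimm_subset hj)
  have hY : 0 ≤ ∑ j ∈ A.J, A.w j * A.p j := Finset.sum_nonneg fun j hj => A.wp_nonneg hj
  have hk : (2 : ℝ) ≤ A.k := by exact_mod_cast A.two_le_k
  have e : (10000 : ℝ) / A.ε = 10000 * A.k := by rw [A.hk]; ring
  rw [e]
  change ∑ j ∈ A.J, A.al j ≤ 10000 * A.k * (∑ j ∈ A.Jimm, A.al j + ∑ j ∈ A.J, A.w j * A.p j)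
  set X := ∑ j ∈ A.Jimm, A.al j
  set Y := ∑ j ∈ A.J, A.w j * A.p j
  have hkX : 0 ≤ A.k * X := by positivity
  have hkY : 2 * Y ≤ A.k * Y := by gcongr
  linarith
end NPSched
end
end

section
/- There is an absolute constant c such that ∑_δ P^δ·W^δ ≤ c·(∑_{j∈J} w_j·p_j + ∑_{j∈J} α_j⁺), where the sum is over all integer density classes δ. -/
/-!
Within a density class `δ` all densities agree with `2 ^ δ` up to a factor `2`, so `W^δ` is at most
`2 · 2 ^ δ · P^δ` and it suffices to bound `2 ^ δ · P^δ(t) ^ 2` for each time `t`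
(`two_pow_mul_Pd_sq_le`). Expanding the square of the sum of remaining sizes and ordering every pair
of active jobs by arrival, half of the square is dominated by the pairs `(j', j)` with `j'` arriving
no later than `j`. A pair with `j' ≠ j` is paid for by `α_j⁺`: remaining sizes only decrease, so `j'`
is still active when `j` arrives, and whichever of the two sums defining `α_j⁺` contains `j'`, its
contribution is at least `2 ^ δ · p_j · p_{j'}(t)` (`alphaPlus_ge`). The diagonal pairs are paid for
by `w_j · p_j`. Each job is charged only by its own class, so summing over the classes gives the
theorem with `c = 4`. The scheduling and rejection rules of the algorithm play no role.
-/

open Finset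
open scoped Classical

noncomputable section

namespace NPSched

/-- `A^δ(t)`: the active jobs of density class `δ` at time `t`. -/
def Ad (J : Finset ℕ) (r p : ℕ → ℕ) (w : ℕ → ℝ) (sched : ℕ → Option ℕ)
    (Jimm : Finset ℕ) (δ : ℤ) (t : ℕ) : Finset ℕ :=
  (activeAt J r p sched Jimm t).filter fun j => cls p w j = δ

/-- `P^δ(t)`: the total remaining size of the active class-`δ` jobs at time `t`. -/
def Pd (J : Finset ℕ) (r p : ℕ → ℕ) (w : ℕ → ℝ) (sched : ℕ → Option ℕ)
    (Jimm : Finset ℕ) (δ : ℤ) (t : ℕ) : ℝ :=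
  ∑ j ∈ Ad J r p w sched Jimm δ t, (rem p sched j t : ℝ)

/-- `W^δ(t)`: the total remaining weight of the active class-`δ` jobs at time `t`. -/
def Wd (J : Finset ℕ) (r p : ℕ → ℕ) (w : ℕ → ℝ) (sched : ℕ → Option ℕ)
    (Jimm : Finset ℕ) (δ : ℤ) (t : ℕ) : ℝ :=
  ∑ j ∈ Ad J r p w sched Jimm δ t, wrem p w sched j t

/-- `P^δ = max_t P^δ(t)`. -/
def Pmax (J : Finset ℕ) (r p : ℕ → ℕ) (w : ℕ → ℝ) (sched : ℕ → Option ℕ)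
    (Jimm : Finset ℕ) (δ : ℤ) : ℝ :=
  ⨆ t : ℕ, Pd J r p w sched Jimm δ t

/-- `W^δ = max_t W^δ(t)`. -/
def Wmax (J : Finset ℕ) (r p : ℕ → ℕ) (w : ℕ → ℝ) (sched : ℕ → Option ℕ)
    (Jimm : Finset ℕ) (δ : ℤ) : ℝ :=
  ⨆ t : ℕ, Wd J r p w sched Jimm δ t

lemma rem_anti (p : ℕ → ℕ) (sched : ℕ → Option ℕ) (j : ℕ) {s t : ℕ} (h : s ≤ t) :
    rem p sched j t ≤ rem p sched j s := by
  unfold rem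
  apply Nat.sub_le_sub_left
  apply Finset.card_le_card
  apply Finset.filter_subset_filter
  simpa using h

/-- Under a total relation `R`, the pairs related in the order `(b, a)` carry at least half of the
square of a sum of nonnegative terms. -/
lemma sq_sum_le_of_total (B : Finset ℕ) (x : ℕ → ℝ) (hx : ∀ j ∈ B, 0 ≤ x j)
    (R : ℕ → ℕ → Prop) (hR : ∀ a b, R a b ∨ R b a) :
    (∑ j ∈ B, x j) ^ 2 ≤ 2 * ∑ a ∈ B, x a * ∑ b ∈ B with R b a, x b := by
  have e1 : ∑ a ∈ B, x a * ∑ b ∈ B with R b a, x b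
      = ∑ a ∈ B, ∑ b ∈ B, if R b a then x a * x b else 0 := by
    refine Finset.sum_congr rfl fun a _ => ?_
    rw [Finset.mul_sum, Finset.sum_filter]
  have e2 : ∑ a ∈ B, ∑ b ∈ B, (if R b a then x a * x b else 0)
      = ∑ a ∈ B, ∑ b ∈ B, if R a b then x a * x b else 0 := by
    rw [Finset.sum_comm]
    simp only [mul_comm]
  rw [two_mul, e1]
  nth_rewrite 2 [e2]
  rw [sq, Finset.sum_mul_sum, ← Finset.sum_add_distrib]
  refine Finset.sum_le_sum fun a ha => ?_
  rw [← Finset.sum_add_distrib]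
  refine Finset.sum_le_sum fun b hb => ?_
  have h0 := mul_nonneg (hx a ha) (hx b hb)
  rcases hR a b with h | h
  · rw [if_pos h]; split_ifs <;> linarith
  · rw [if_pos h]; split_ifs <;> linarith

section Classes

variable {J : Finset ℕ} {p : ℕ → ℕ} {w : ℕ → ℝ}

lemma den_pos (hp : ∀ j ∈ J, 0 < p j) (hw : ∀ j ∈ J, 0 < w j) {j : ℕ} (hj : j ∈ J) :
    0 < den p w j :=
  div_pos (hw j hj) (by exact_mod_cast hp j hj)

lemma zpow_cls_le (hp : ∀ j ∈ J, 0 < p j) (hw : ∀ j ∈ J, 0 < w j) {j : ℕ} (hj : j ∈ J) :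
    (2 : ℝ) ^ cls p w j ≤ den p w j := by
  simpa [cls] using Int.zpow_log_le_self (b := 2) (by norm_num) (den_pos hp hw hj)

lemma den_le_zpow_cls (p : ℕ → ℕ) (w : ℕ → ℝ) (j : ℕ) :
    den p w j ≤ 2 * (2 : ℝ) ^ cls p w j := by
  have h := (Int.lt_zpow_succ_log_self (b := 2) (by norm_num) (den p w j)).le
  rw [zpow_add_one₀ (by norm_num), mul_comm] at h
  simpa [cls] using h

lemma zpow_cls_mul_le (hp : ∀ j ∈ J, 0 < p j) (hw : ∀ j ∈ J, 0 < w j) {j : ℕ} (hj : j ∈ J) :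
    (2 : ℝ) ^ cls p w j * p j ≤ w j := by
  have h0 : (0 : ℝ) < p j := by exact_mod_cast hp j hj
  have h := zpow_cls_le hp hw hj
  rwa [den, le_div_iff₀ h0] at h

variable (r : ℕ → ℕ) (sched : ℕ → Option ℕ) (Jimm : Finset ℕ)

/-- Both sums in `α_j⁺` contribute at least `2 ^ ⌊ρ_j⌋₂ · p_j · p_{j'}(r_j)` for each of their
jobs `j'`. -/
lemma alphaPlus_ge (hp : ∀ j ∈ J, 0 < p j) (hw : ∀ j ∈ J, 0 < w j) {j : ℕ} (hj : j ∈ J) :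
    (2 : ℝ) ^ cls p w j * p j *
        ∑ j' ∈ arrSet J r p sched Jimm j with cls p w j ≤ cls p w j', (rem p sched j' (r j) : ℝ)
      ≤ alphaPlus J r p w sched Jimm j := by
  rw [← Finset.sum_filter_add_sum_filter_not _ (fun j' => den p w j ≤ den p w j'),
    Finset.filter_filter, Finset.filter_filter, mul_add]
  simp only [not_le]
  unfold alphaPlus
  refine add_le_add ?_ ?_
  · exact mul_le_mul_of_nonneg_right (zpow_cls_mul_le hp hw hj)
      (Finset.sum_nonneg fun _ _ => Nat.cast_nonneg _)
  · rw [mul_comm ((2 : ℝ) ^ _), mul_assoc, Finset.mul_sum]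
    refine mul_le_mul_of_nonneg_left (Finset.sum_le_sum fun j' hj' => ?_) (Nat.cast_nonneg _)
    simp only [Finset.mem_filter, arrSet] at hj'
    refine mul_le_mul_of_nonneg_right ?_ (Nat.cast_nonneg _)
    exact (zpow_le_zpow_right₀ (by norm_num) hj'.2.1).trans (zpow_cls_le hp hw hj'.1.1)

lemma alphaPlus_nonneg (hp : ∀ j ∈ J, 0 < p j) (hw : ∀ j ∈ J, 0 < w j) {j : ℕ} (hj : j ∈ J) :
    0 ≤ alphaPlus J r p w sched Jimm j :=
  le_trans (by positivity) (alphaPlus_ge r sched Jimm hp hw hj)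

/-- The part of the right-hand side of the theorem carried by the jobs of density class `δ`. -/
def clsCharge (J : Finset ℕ) (r p : ℕ → ℕ) (w : ℕ → ℝ) (sched : ℕ → Option ℕ)
    (Jimm : Finset ℕ) (δ : ℤ) : ℝ :=
  ∑ j ∈ J with cls p w j = δ, (w j * p j + alphaPlus J r p w sched Jimm j)

lemma charge_nonneg (hp : ∀ j ∈ J, 0 < p j) (hw : ∀ j ∈ J, 0 < w j) {j : ℕ} (hj : j ∈ J) :
    0 ≤ w j * p j + alphaPlus J r p w sched Jimm j :=
  add_nonneg (mul_nonneg (hw j hj).le (Nat.cast_nonneg _))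
    (alphaPlus_nonneg r sched Jimm hp hw hj)

/-- At any time `t`, the pairs of active class-`δ` jobs in which `j` arrives last are paid for by
`w_j · p_j` (the pair `(j, j)`) and `α_j⁺` (all other pairs). -/
lemma pairs_le_charge (hp : ∀ j ∈ J, 0 < p j) (hw : ∀ j ∈ J, 0 < w j) (δ : ℤ) (t : ℕ) {j : ℕ}
    (hj : j ∈ Ad J r p w sched Jimm δ t) :
    (2 : ℝ) ^ δ * (rem p sched j t *
        ∑ j' ∈ Ad J r p w sched Jimm δ t with arrLE r j' j, (rem p sched j' t : ℝ))
      ≤ w j * p j + alphaPlus J r p w sched Jimm j := by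
  have hj' := hj
  simp only [Ad, activeAt, Finset.mem_filter] at hj'
  obtain ⟨⟨hJ, hrt, -, -⟩, rfl⟩ := hj'
  have hrem : (rem p sched j t : ℝ) ≤ p j := by exact_mod_cast Nat.sub_le _ _
  have hz : (0 : ℝ) ≤ 2 ^ cls p w j := by positivity
  have hmem : j ∈ (Ad J r p w sched Jimm (cls p w j) t).filter (fun j' => arrLE r j' j) :=
    Finset.mem_filter.2 ⟨hj, Or.inr ⟨rfl, le_rfl⟩⟩
  have hsub : ∑ j' ∈ ((Ad J r p w sched Jimm (cls p w j) t).filter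
        (fun j' => arrLE r j' j)).erase j, (rem p sched j' t : ℝ)
      ≤ ∑ j' ∈ arrSet J r p sched Jimm j with cls p w j ≤ cls p w j',
          (rem p sched j' (r j) : ℝ) := by
    refine (Finset.sum_le_sum fun j' _ => Nat.cast_le.2 (rem_anti p sched j' hrt)).trans ?_
    refine Finset.sum_le_sum_of_subset_of_nonneg ?_ fun _ _ _ => Nat.cast_nonneg _
    intro i hi
    obtain ⟨hne, hi⟩ := Finset.mem_erase.1 hi
    obtain ⟨hi, ho⟩ := Finset.mem_filter.1 hi
    simp only [Ad, activeAt, Finset.mem_filter] at hi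
    obtain ⟨⟨hiJ, -, him, hpos⟩, hc⟩ := hi
    unfold arrLE at ho
    simp only [arrSet, Finset.mem_filter]
    refine ⟨⟨hiJ, ?_, him, hpos.trans_le (rem_anti p sched i hrt)⟩, hc.ge⟩
    omega
  have hnn : (0 : ℝ) ≤ ∑ j' ∈ arrSet J r p sched Jimm j with cls p w j ≤ cls p w j',
      (rem p sched j' (r j) : ℝ) := Finset.sum_nonneg fun _ _ => Nat.cast_nonneg _
  rw [← Finset.add_sum_erase _ _ hmem, mul_add, mul_add]
  refine add_le_add ?_ (le_trans ?_ (alphaPlus_ge r sched Jimm hp hw hJ))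
  · calc (2 : ℝ) ^ cls p w j * (rem p sched j t * rem p sched j t)
        ≤ 2 ^ cls p w j * (p j * p j) := by gcongr
      _ = (2 ^ cls p w j * p j) * p j := by ring
      _ ≤ w j * p j := by gcongr; exact zpow_cls_mul_le hp hw hJ
  · rw [mul_assoc]
    gcongr

lemma two_pow_mul_Pd_sq_le (hp : ∀ j ∈ J, 0 < p j) (hw : ∀ j ∈ J, 0 < w j) (δ : ℤ) (t : ℕ) :
    (2 : ℝ) ^ δ * Pd J r p w sched Jimm δ t ^ 2 ≤ 2 * clsCharge J r p w sched Jimm δ := by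
  have h1 := sq_sum_le_of_total (Ad J r p w sched Jimm δ t) (fun j => (rem p sched j t : ℝ))
    (fun _ _ => Nat.cast_nonneg _) (arrLE r) (fun a b => by unfold arrLE; omega)
  have h2 : (2 : ℝ) ^ δ * Pd J r p w sched Jimm δ t ^ 2 ≤ 2 ^ δ * _ :=
    mul_le_mul_of_nonneg_left h1 (by positivity)
  refine h2.trans ?_
  rw [mul_left_comm, Finset.mul_sum]
  refine mul_le_mul_of_nonneg_left ?_ (by norm_num)
  refine (Finset.sum_le_sum fun j hj => pairs_le_charge r sched Jimm hp hw δ t hj).trans ?_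
  refine Finset.sum_le_sum_of_subset_of_nonneg ?_ fun j hj _ => ?_
  · intro i hi
    simp only [Ad, activeAt, Finset.mem_filter] at hi ⊢
    exact ⟨hi.1.1, hi.2⟩
  · exact charge_nonneg r sched Jimm hp hw (Finset.mem_filter.1 hj).1

lemma Wd_le (δ : ℤ) (t : ℕ) :
    Wd J r p w sched Jimm δ t ≤ 2 * (2 : ℝ) ^ δ * Pd J r p w sched Jimm δ t := by
  unfold Wd Pd
  rw [Finset.mul_sum]
  refine Finset.sum_le_sum fun j hj => ?_
  simp only [Ad, activeAt, Finset.mem_filter] at hj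
  obtain ⟨-, rfl⟩ := hj
  exact mul_le_mul_of_nonneg_right (den_le_zpow_cls p w j) (Nat.cast_nonneg _)

lemma Pmax_mul_Wmax_le (hp : ∀ j ∈ J, 0 < p j) (hw : ∀ j ∈ J, 0 < w j) (δ : ℤ) :
    Pmax J r p w sched Jimm δ * Wmax J r p w sched Jimm δ
      ≤ 4 * clsCharge J r p w sched Jimm δ := by
  have hz : (0 : ℝ) < 2 ^ δ := by positivity
  have hc : 0 ≤ clsCharge J r p w sched Jimm δ :=
    Finset.sum_nonneg fun j hj => charge_nonneg r sched Jimm hp hw (Finset.mem_filter.1 hj).1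
  set m : ℝ := √(2 * clsCharge J r p w sched Jimm δ / 2 ^ δ) with hm
  have hm0 : 0 ≤ m := Real.sqrt_nonneg _
  have hm2 : m ^ 2 = 2 * clsCharge J r p w sched Jimm δ / 2 ^ δ := Real.sq_sqrt (by positivity)
  have hP : ∀ t, Pd J r p w sched Jimm δ t ≤ m := fun t => by
    refine Real.le_sqrt_of_sq_le ?_
    rw [le_div_iff₀ hz, mul_comm]
    exact two_pow_mul_Pd_sq_le r sched Jimm hp hw δ t
  have hPm : Pmax J r p w sched Jimm δ ≤ m := ciSup_le hP
  have hWm : Wmax J r p w sched Jimm δ ≤ 2 * 2 ^ δ * m := ciSup_le fun t =>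
    (Wd_le r sched Jimm δ t).trans (mul_le_mul_of_nonneg_left (hP t) (by positivity))
  have hW0 : 0 ≤ Wmax J r p w sched Jimm δ := by
    refine Real.iSup_nonneg fun t => Finset.sum_nonneg fun j hj => ?_
    simp only [Ad, activeAt, Finset.mem_filter] at hj
    exact mul_nonneg (den_pos hp hw hj.1.1).le (Nat.cast_nonneg _)
  calc Pmax J r p w sched Jimm δ * Wmax J r p w sched Jimm δ
      ≤ m * (2 * 2 ^ δ * m) := mul_le_mul hPm hWm hW0 hm0
    _ = 2 * 2 ^ δ * m ^ 2 := by ring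
    _ = 4 * clsCharge J r p w sched Jimm δ := by rw [hm2]; field_simp; ring

lemma Pmax_eq_zero {δ : ℤ} (h : δ ∉ J.image (cls p w)) : Pmax J r p w sched Jimm δ = 0 := by
  have h0 : ∀ t, Pd J r p w sched Jimm δ t = 0 := fun t => by
    refine Finset.sum_eq_zero fun j hj => absurd ?_ h
    simp only [Ad, activeAt, Finset.mem_filter] at hj
    exact Finset.mem_image.2 ⟨j, hj.1.1, hj.2⟩
  simp [Pmax, h0]

end Classes

/-- `∑_δ P^δ·W^δ ≤ c·(∑_{j∈J} w_j·p_j + ∑_{j∈J} α_j⁺)` for an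
absolute constant `c`, the sum ranging over all integer density classes `δ`. -/
theorem sum_Pmax_Wmax_le :
    ∃ c : ℝ, 0 < c ∧ ∀ A : AlgA,
      ∑' δ : ℤ, Pmax A.J A.r A.p A.w A.sched A.Jimm δ * Wmax A.J A.r A.p A.w A.sched A.Jimm δ ≤
        c * ((∑ j ∈ A.J, A.w j * A.p j) +
          ∑ j ∈ A.J, alphaPlus A.J A.r A.p A.w A.sched A.Jimm j) := by
  refine ⟨4, by norm_num, fun A => ?_⟩
  -- Only the finitely many classes of jobs in `A.J` contribute to the series.
  rw [tsum_eq_sum (s := A.J.image (cls A.p A.w)) fun δ hδ => by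
    rw [Pmax_eq_zero A.r A.sched A.Jimm hδ, zero_mul]]
  refine (Finset.sum_le_sum fun δ _ =>
    Pmax_mul_Wmax_le A.r A.sched A.Jimm A.hp A.hw δ).trans (le_of_eq ?_)
  rw [← Finset.mul_sum, ← Finset.sum_add_distrib]
  congr 1
  exact Finset.sum_fiberwise_of_maps_to (fun j hj => Finset.mem_image_of_mem _ hj) _

end NPSched
end
end
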